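/- Central limit theorem for binomial random variables with varying success probabilities: if X_n has the Binomial(n, p_n) distribution with p_n ∈ (0,1) and p_n → c for some c ∈ (0,1), then the distribution of (√n / √(p_n(1−p_n))) · (X_n/n − p_n) converges weakly (in distribution) to the standard Gaussian distribution N(0,1). -/

import Mathlib

/-!
The proof goes through characteristic functions and Lévy's convergence theorem. For `n ≥ 1`, the
binomial theorem shows that the characteristic function at `t` of the normalised variable is
`(p e^{ib(1-p)} + (1-p) e^{-ibp}) ^ n`, where `p = p_n` and `b = t / (√n √(p(1-p)))`
(`charFun_map_binomialReal`). Expanding both exponentials to second order, the linear terms cancel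
and the base is `1 - b² p(1-p) / 2 + O(|b|³)` with an absolute constant
(`norm_bernoulli_charFun_remainder_le`). Since `n b² p(1-p) = t²`, and since `b → 0` because `p_n`
stays away from `0` and `1`, `n * (base - 1) → -t² / 2`; hence the `n`-th power tends to
`e^{-t²/2}`, the characteristic function of the standard Gaussian.
-/

open MeasureTheory

/-- The binomial distribution `Binomial(n, p)`, viewed as a probability measure on `ℝ`
supported on `{0, 1, …, n}`. -/
noncomputable def binomialReal (n : ℕ) (p : ℝ) : Measure ℝ :=
  ∑ k ∈ Finset.range (n + 1),
    ENNReal.ofReal ((n.choose k : ℝ) * p ^ k * (1 - p) ^ (n - k)) •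
      Measure.dirac (k : ℝ)

open Filter Topology

lemma integral_binomialReal {E : Type*} [NormedAddCommGroup E] [NormedSpace ℝ E] [CompleteSpace E]
    (n : ℕ) {p : ℝ} (h0 : 0 ≤ p) (h1 : p ≤ 1) (f : ℝ → E) :
    ∫ x, f x ∂(binomialReal n p) =
      ∑ k ∈ Finset.range (n + 1), ((n.choose k : ℝ) * p ^ k * (1 - p) ^ (n - k)) • f k := by
  have hq : 0 ≤ 1 - p := by linarith
  rw [binomialReal, integral_finsetSum_measure]
  · refine Finset.sum_congr rfl fun k _ => ?_
    rw [integral_smul_measure, integral_dirac, ENNReal.toReal_ofReal (by positivity)]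
  · exact fun k _ => (integrable_dirac (by simp)).smul_measure ENNReal.ofReal_ne_top

lemma isProbabilityMeasure_binomialReal (n : ℕ) {p : ℝ} (h0 : 0 ≤ p) (h1 : p ≤ 1) :
    IsProbabilityMeasure (binomialReal n p) := by
  have hq : 0 ≤ 1 - p := by linarith
  constructor
  simp only [binomialReal, Measure.coe_finsetSum, Finset.sum_apply, Measure.smul_apply,
    measure_univ, smul_eq_mul, mul_one]
  rw [← ENNReal.ofReal_sum_of_nonneg (fun k _ => by positivity), ← ENNReal.ofReal_one]
  congr 1
  have h := add_pow p (1 - p) n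
  rw [add_sub_cancel, one_pow] at h
  exact (Finset.sum_congr rfl fun k _ => by ring).trans h.symm

lemma charFun_map_binomialReal {n : ℕ} (hn : n ≠ 0) {p : ℝ} (hp : p ∈ Set.Ioo (0 : ℝ) 1) (t : ℝ) :
    charFun (Measure.map (fun x : ℝ => √n / √(p * (1 - p)) * (x / n - p)) (binomialReal n p)) t =
      ((p : ℂ) * Complex.exp (((t / (√n * √(p * (1 - p))) : ℝ) : ℂ) * (1 - p) * Complex.I) +
        (1 - p) * Complex.exp (-(((t / (√n * √(p * (1 - p))) : ℝ) : ℂ) * p * Complex.I))) ^ n := by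
  have hn' : (0 : ℝ) < n := by positivity
  have hσ : 0 < √(p * (1 - p)) := Real.sqrt_pos.2 (mul_pos hp.1 (by linarith [hp.2]))
  have hs0 : 0 < √(n : ℝ) := Real.sqrt_pos.2 hn'
  rw [charFun_apply_real, integral_map (by fun_prop) (by fun_prop),
    integral_binomialReal n hp.1.le hp.2.le, add_pow]
  refine Finset.sum_congr rfl fun k hk => ?_
  have hkn : k ≤ n := Nat.lt_succ_iff.1 (Finset.mem_range.1 hk)
  set b : ℝ := t / (√n * √(p * (1 - p))) with hb
  -- the centred value `k - np` splits as `k (1 - p) - (n - k) p`, one summand for each trial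
  have key : t * (√n / √(p * (1 - p)) * ((k : ℝ) / n - p)) =
      k * (b * (1 - p)) - ((n - k : ℕ) : ℝ) * (b * p) := by
    rw [hb, Nat.cast_sub hkn]
    field_simp
    rw [Real.sq_sqrt hn'.le]
    ring
  have harg : (t : ℂ) * ((√n / √(p * (1 - p)) * ((k : ℝ) / n - p) : ℝ) : ℂ) * Complex.I =
      k * ((b : ℂ) * (1 - p) * Complex.I) + ((n - k : ℕ) : ℂ) * (-((b : ℂ) * p * Complex.I)) := by
    rw [← Complex.ofReal_mul, key]
    push_cast
    ring
  rw [harg, Complex.exp_add, Complex.exp_nat_mul, Complex.exp_nat_mul, Complex.real_smul,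
    mul_pow, mul_pow]
  push_cast
  ring

/-- Second-order expansion of the characteristic function of a centred Bernoulli variable, with an
error bound uniform in the success probability. -/
lemma norm_bernoulli_charFun_remainder_le {p b : ℝ} (h0 : 0 ≤ p) (h1 : p ≤ 1) (hb : |b| ≤ 1) :
    ‖(p : ℂ) * Complex.exp ((b : ℂ) * (1 - p) * Complex.I) +
        (1 - p) * Complex.exp (-((b : ℂ) * p * Complex.I)) - 1 +
        ((b ^ 2 * (p * (1 - p)) / 2 : ℝ) : ℂ)‖ ≤ |b| ^ 3 := by
  have hq : 0 ≤ 1 - p := by linarith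
  have taylor : ∀ z : ℂ, ‖z‖ ≤ |b| → ‖Complex.exp z - (1 + z + z ^ 2 / 2)‖ ≤ |b| ^ 3 := by
    intro z hz
    have h := Complex.exp_bound (x := z) (hz.trans hb) (n := 3) (by norm_num)
    simp only [Finset.sum_range_succ, Finset.sum_range_zero, Nat.factorial] at h
    norm_num at h
    have h3 : ‖z‖ ^ 3 ≤ |b| ^ 3 := by gcongr
    have : 0 ≤ ‖z‖ ^ 3 := by positivity
    linarith
  have hA := taylor ((b : ℂ) * (1 - p) * Complex.I) (by
    rw [norm_mul, norm_mul, Complex.norm_I, mul_one, Complex.norm_real, Real.norm_eq_abs,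
      ← Complex.ofReal_one, ← Complex.ofReal_sub, Complex.norm_real, Real.norm_of_nonneg hq]
    exact mul_le_of_le_one_right (abs_nonneg b) (by linarith))
  have hB := taylor (-((b : ℂ) * p * Complex.I)) (by
    rw [norm_neg, norm_mul, norm_mul, Complex.norm_I, mul_one, Complex.norm_real, Real.norm_eq_abs,
      Complex.norm_real, Real.norm_of_nonneg h0]
    exact mul_le_of_le_one_right (abs_nonneg b) h1)
  set A := Complex.exp ((b : ℂ) * (1 - p) * Complex.I)
  set B := Complex.exp (-((b : ℂ) * p * Complex.I))
  have hsplit : (p : ℂ) * A + (1 - p) * B - 1 + ((b ^ 2 * (p * (1 - p)) / 2 : ℝ) : ℂ) =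
      (p : ℂ) * (A - (1 + (b : ℂ) * (1 - p) * Complex.I +
        ((b : ℂ) * (1 - p) * Complex.I) ^ 2 / 2)) +
      ((1 - p : ℝ) : ℂ) * (B - (1 + -((b : ℂ) * p * Complex.I) +
        (-((b : ℂ) * p * Complex.I)) ^ 2 / 2)) := by
    push_cast
    linear_combination ((p : ℂ) * (b * (1 - p)) ^ 2 / 2 + (1 - p) * (b * p) ^ 2 / 2) *
      Complex.I_sq
  rw [hsplit]
  refine (norm_add_le _ _).trans ?_
  rw [norm_mul, norm_mul, Complex.norm_real, Complex.norm_real, Real.norm_of_nonneg h0,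
    Real.norm_of_nonneg hq]
  nlinarith [mul_le_mul_of_nonneg_left hA h0, mul_le_mul_of_nonneg_left hB hq]

/-- CLT for binomial random variables with varying success probabilities: if
`X_n ~ Binomial(n, p_n)` with `p_n ∈ (0,1)` and `p_n → c ∈ (0,1)`, then the law of
`(√n / √(p_n(1−p_n))) · (X_n/n − p_n)` converges weakly to the standard Gaussian. -/
theorem binomial_clt
    (p : ℕ → ℝ) (hp : ∀ n, p n ∈ Set.Ioo (0 : ℝ) 1)
    (c : ℝ) (hc : c ∈ Set.Ioo (0 : ℝ) 1)
    (hpc : Filter.Tendsto p Filter.atTop (nhds c)) :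
    ∀ f : BoundedContinuousFunction ℝ ℝ,
      Filter.Tendsto
        (fun n : ℕ => ∫ x, f x ∂ (Measure.map
          (fun x : ℝ => Real.sqrt n / Real.sqrt (p n * (1 - p n)) * (x / n - p n))
          (binomialReal n (p n))))
        Filter.atTop
        (nhds (∫ x, f x ∂ (ProbabilityTheory.gaussianReal 0 1))) := by
  have hprob (n : ℕ) : IsProbabilityMeasure (Measure.map
      (fun x : ℝ => √n / √(p n * (1 - p n)) * (x / n - p n)) (binomialReal n (p n))) := by
    have := isProbabilityMeasure_binomialReal n (hp n).1.le (hp n).2.le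
    exact Measure.isProbabilityMeasure_map (by fun_prop)
  let μ : ℕ → ProbabilityMeasure ℝ := fun n => ⟨_, hprob n⟩
  let μ₀ : ProbabilityMeasure ℝ := ⟨ProbabilityTheory.gaussianReal 0 1, inferInstance⟩
  suffices h : Tendsto μ atTop (𝓝 μ₀) from
    ProbabilityMeasure.tendsto_iff_forall_integral_tendsto.1 h
  refine ProbabilityMeasure.tendsto_iff_tendsto_charFun.2 fun t => ?_
  set b : ℕ → ℝ := fun n => t / (√n * √(p n * (1 - p n))) with hbdef
  have hpq (n : ℕ) : 0 < p n * (1 - p n) := mul_pos (hp n).1 (by linarith [(hp n).2])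
  have hcq : 0 < c * (1 - c) := mul_pos hc.1 (by linarith [hc.2])
  have hpqlim : Tendsto (fun n => p n * (1 - p n)) atTop (𝓝 (c * (1 - c))) :=
    hpc.mul (tendsto_const_nhds.sub hpc)
  have hb0 : Tendsto b atTop (𝓝 0) := by
    have hsq : Tendsto (fun n : ℕ => √(n : ℝ)) atTop atTop :=
      Real.tendsto_sqrt_atTop.comp tendsto_natCast_atTop_atTop
    exact tendsto_const_nhds.div_atTop (hsq.atTop_mul_pos (Real.sqrt_pos.2 hcq) hpqlim.sqrt)
  have hbsq (n : ℕ) (hn : n ≠ 0) : n * b n ^ 2 * (p n * (1 - p n)) = t ^ 2 := by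
    have hn' : (0 : ℝ) < n := by positivity
    rw [hbdef]
    simp only [div_pow, mul_pow]
    rw [Real.sq_sqrt hn'.le, Real.sq_sqrt (hpq n).le]
    have h1 := (hp n).1.ne'
    have h2 : 1 - p n ≠ 0 := (sub_pos.2 (hp n).2).ne'
    field_simp
  let g : ℕ → ℂ := fun n => (p n : ℂ) * Complex.exp ((b n : ℂ) * (1 - p n) * Complex.I) +
    (1 - p n) * Complex.exp (-((b n : ℂ) * p n * Complex.I)) - 1
  have hg : Tendsto (fun n : ℕ => (n : ℂ) * g n) atTop (𝓝 (-(t : ℂ) ^ 2 / 2)) := by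
    rw [← tendsto_sub_nhds_zero_iff]
    -- `n |b|³ = (t² / (p(1-p))) |b|` tends to `0`
    have hlim : Tendsto (fun n => t ^ 2 / (p n * (1 - p n)) * |b n|) atTop (𝓝 0) := by
      simpa using (tendsto_const_nhds.div hpqlim hcq.ne').mul hb0.abs
    refine squeeze_zero_norm' ?_ hlim
    have hb1 : ∀ᶠ n in atTop, |b n| < 1 :=
      (by simpa using hb0.abs : Tendsto (fun n => |b n|) atTop (𝓝 0)).eventually_lt_const one_pos
    filter_upwards [hb1, eventually_ne_atTop 0] with n hn1 hn
    have hrem := norm_bernoulli_charFun_remainder_le (hp n).1.le (hp n).2.le hn1.le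
    have hcast : (n : ℂ) * (b n : ℂ) ^ 2 * (p n * (1 - p n)) = (t : ℂ) ^ 2 := by
      exact_mod_cast congrArg (fun x : ℝ => (x : ℂ)) (hbsq n hn)
    have heq : (n : ℂ) * g n - -(t : ℂ) ^ 2 / 2 =
        n * (g n + ((b n ^ 2 * (p n * (1 - p n)) / 2 : ℝ) : ℂ)) := by
      push_cast
      linear_combination -hcast / 2
    rw [heq, norm_mul, Complex.norm_natCast]
    calc (n : ℝ) * ‖g n + ((b n ^ 2 * (p n * (1 - p n)) / 2 : ℝ) : ℂ)‖
        ≤ n * |b n| ^ 3 := by gcongr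
      _ = t ^ 2 / (p n * (1 - p n)) * |b n| := by
        rw [← hbsq n hn, mul_div_assoc, div_self (hpq n).ne', ← sq_abs (b n)]
        ring
  have hpow := Complex.tendsto_one_add_pow_exp_of_tendsto hg
  have hlimit : charFun (μ₀ : Measure ℝ) t = Complex.exp (-(t : ℂ) ^ 2 / 2) := by
    change charFun (ProbabilityTheory.gaussianReal 0 1) t = _
    rw [ProbabilityTheory.charFun_gaussianReal]
    congr 1
    simp [neg_div]
  rw [hlimit]
  refine hpow.congr' ?_
  filter_upwards [eventually_ne_atTop 0] with n hn
  refine Eq.trans ?_ (charFun_map_binomialReal hn (hp n) t).symm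
  congr 1
  exact add_sub_cancel _ _
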